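/- Let s ≥ 1, ϑ ≥ 0, and take the first-order RKC1 coefficients: ω0 = 1 + ϑ/s², ω1 = T_s(ω0)/T_s′(ω0), b_j = 1/T_j(ω0), with μ_j, ν_j, κ_j the RKC coefficients (γ_j = 0). Let f : ℝⁿ → ℝⁿ be twice continuously differentiable with ‖f″(x)‖ ≤ C_{f″} for all x. Let yⁿ, ŷⁿ ∈ ℝⁿ and Δt > 0, and assume the Jacobian matrix J of f at yⁿ is symmetric with all eigenvalues in [−ρ, 0], where Δt·ρ ≤ 2ω0/ω1. Define the exact RKC step: d_0 = 0, d_1 = μ_1 Δt f(yⁿ), d_j = ν_j d_{j−1} + κ_j d_{j−2} + μ_j Δt f(yⁿ + d_{j−1}) for 2 ≤ j ≤ s, y^{n+1} = yⁿ + d_s; and the mixed-precision step: d̂_0 = 0, d̂_1 = μ_1 Δt f(ŷⁿ), d̂_j = ν_j d̂_{j−1} + κ_j d̂_{j−2} + μ_j Δt (f(ŷⁿ) + Δ̂f_{j−1}) for 2 ≤ j ≤ s, ŷ^{n+1} = ŷⁿ + d̂_s. Assume for all 1 ≤ j ≤ s−1: ‖Δ̂f_j − (f(ŷⁿ + d̂_j)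 − f(ŷⁿ))‖₂ ≤ min(Ĉ ε Δt, C_Δ ‖ŷⁿ‖₂), ‖d̂_j‖₂ ≤ C_d · min(Δt ‖f(ŷⁿ)‖₂, ‖ŷⁿ‖₂) and ‖d_j‖₂ ≤ C_d · min(Δt ‖f(yⁿ)‖₂, ‖yⁿ‖₂), for constants Ĉ, ε, C_Δ, C_d ≥ 0. Then ‖ŷ^{n+1} − y^{n+1}‖₂ ≤ ‖ŷⁿ − yⁿ‖₂ + C_{f″} ‖ŷⁿ − yⁿ‖₂² Δt + min(Ĉ ε Δt, C_Δ ‖ŷⁿ‖₂) Δt + C_{f″} C_d² ( min(Δt ‖f(ŷⁿ)‖₂, ‖ŷⁿ‖₂)² + min(Δt ‖f(yⁿ)‖₂, ‖yⁿ‖₂)² ) Δt. -/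

import Mathlib

noncomputable section

/-- Chebyshev polynomial of the first kind, evaluated in an arbitrary ring. -/
def chebT (R : Type*) [Ring R] : ℕ → R → R
  | 0, _ => 1
  | 1, x => x
  | n + 2, x => 2 * x * chebT R (n + 1) x - chebT R n x

/-- Chebyshev polynomial of the second kind, evaluated in an arbitrary ring. -/
def chebU (R : Type*) [Ring R] : ℕ → R → R
  | 0, _ => 1
  | 1, x => 2 * x
  | n + 2, x => 2 * x * chebU R (n + 1) x - chebU R n x

/-- Spectral norm of a real matrix: operator norm induced by the Euclidean norms. -/
def specNorm {m n : ℕ} (A : Matrix (Fin m) (Fin n) ℝ) : ℝ :=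
  ‖(Matrix.toEuclideanLin A).toContinuousLinearMap‖

/-!
Let `e = yhat - yn` and let `D_j` be the difference of the stage increments of the two schemes.
Rescaled by `T_j(ω₀)`, the errors `e + D_j` satisfy the Chebyshev three-term recurrence with the
symmetric operator `X = ω₀ + ω₁ Δt J` in place of the variable, perturbed by multiples of the
residuals `r_k` that `D_k` leaves in the equation linearized at `yn`. Variation of constants turns
this into
`T_s(ω₀) (e + D_s) = T_s(X) e + ω₁ Δt ∑_{k < s} c_k T_k(ω₀) U_{s-1-k}(X) r_k`,
where `c_0 = 1` and `c_k = 2` for `k ≥ 1`. Under the step size restriction `X` has its spectrum in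
`[-ω₀, ω₀]`, where `|T_k|` and `|U_k|` are largest at `ω₀`. Hence `T_s(X)` has norm at most
`T_s(ω₀)`, and the sum is bounded through `∑_{k < s} c_k T_k U_{s-1-k} = T_s'`; as
`ω₁ T_s'(ω₀) = T_s(ω₀)`, the residuals contribute at most `Δt max_k ‖r_k‖`. By Taylor's formula the
residuals are quadratic in the errors, up to the rounding errors.
-/

open Finset Set Polynomial Polynomial.Chebyshev
open scoped InnerProductSpace

theorem chebT_eq_eval_T {R : Type*} [CommRing R] (n : ℕ) (x : R) :
    chebT R n x = (T R n).eval x := by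
  induction n using Nat.twoStepInduction with
  | zero => simp [chebT]
  | one => simp [chebT]
  | more n ih₀ ih₁ =>
    push_cast at ih₁ ⊢
    simp [chebT, T_add_two, ih₀, ih₁]

section Chebyshev

variable {w x : ℝ}

theorem eval_T_real_pos (n : ℤ) (hw : 1 ≤ w) : 0 < (T ℝ n).eval w :=
  zero_lt_one.trans_le (one_le_eval_T_real n hw)

theorem monotoneOn_eval_T_real (n : ℤ) : MonotoneOn (fun x ↦ (T ℝ n).eval x) (Ici 1) := by
  intro x (hx : 1 ≤ x) y (hy : 1 ≤ y) hxy
  have harcosh : Real.arcosh x ≤ Real.arcosh y :=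
    (Real.arcosh_le_arcosh (by linarith) (by linarith)).mpr hxy
  dsimp only
  rw [← Real.cosh_arcosh hx, ← Real.cosh_arcosh hy, T_real_cosh, T_real_cosh, Real.cosh_le_cosh,
    abs_mul, abs_mul, abs_of_nonneg (Real.arcosh_nonneg hx), abs_of_nonneg (Real.arcosh_nonneg hy)]
  gcongr

theorem abs_eval_T_real_abs (n : ℤ) (x : ℝ) : |(T ℝ n).eval (|x|)| = |(T ℝ n).eval x| := by
  rcases abs_choice x with h | h <;> rw [h]
  simp [T_eval_neg, abs_mul]

theorem abs_eval_T_real_le_eval (n : ℤ) (hw : 1 ≤ w) (hx : |x| ≤ w) :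
    |(T ℝ n).eval x| ≤ (T ℝ n).eval w := by
  rcases le_total |x| 1 with h | h
  · exact (abs_eval_T_real_le_one n h).trans (one_le_eval_T_real n hw)
  · have hpos : 0 ≤ (T ℝ n).eval (|x|) := zero_le_one.trans (one_le_eval_T_real n h)
    rw [← abs_eval_T_real_abs, abs_of_nonneg hpos]
    exact monotoneOn_eval_T_real n h hw hx

theorem abs_eval_U_real_le_eval (n : ℕ) (hw : 1 ≤ w) (hx : |x| ≤ w) :
    |(U ℝ n).eval x| ≤ (U ℝ n).eval w := by
  induction n using Nat.twoStepInduction with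
  | zero => simp
  | one => simpa [abs_mul] using hx
  | more n ih _ =>
    have hT := abs_eval_T_real_le_eval (n + 2) hw hx
    push_cast
    simp only [U_eq_two_mul_T_add_U, eval_add, eval_mul, eval_ofNat]
    refine (abs_add_le _ _).trans (add_le_add ?_ ih)
    rw [abs_mul, abs_two]
    gcongr

theorem eval_U_real_pos (n : ℕ) (hw : 1 ≤ w) : 0 < (U ℝ n).eval w :=
  calc (0 : ℝ) < n + 1 := by positivity
    _ = (U ℝ n).eval 1 := by simp
    _ ≤ |(U ℝ n).eval 1| := le_abs_self _
    _ ≤ (U ℝ n).eval w := abs_eval_U_real_le_eval n hw (by simpa using hw)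

theorem eval_derivative_T_real_pos {n : ℕ} (hn : 1 ≤ n) (hw : 1 ≤ w) :
    0 < (derivative (T ℝ n)).eval w := by
  obtain ⟨m, rfl⟩ := Nat.exists_eq_add_of_le' hn
  have := eval_U_real_pos m hw
  rw [T_derivative_eq_U, eval_mul, eval_intCast, Nat.cast_add, Nat.cast_one, add_sub_cancel_right]
  positivity

theorem eq_add_sum_of_chebyshev_recurrence {R A M : Type*} [CommRing R] [Ring A] [Algebra R A]
    [AddCommGroup M] [Module A M] {x : A} {u g : ℕ → M} {n : ℕ}
    (h_one : 1 ≤ n → u 1 = x • u 0 + g 0)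
    (h_add_two : ∀ j, j + 2 ≤ n → u (j + 2) = (2 * x) • u (j + 1) - u j + g (j + 1)) :
    u n = aeval x (T R n) • u 0 + ∑ k ∈ range n, aeval x (U R (n - 1 - k)) • g k := by
  induction n using Nat.twoStepInduction with
  | zero => simp
  | one => simpa using h_one le_rfl
  | more n ih₀ ih₁ =>
    have hU (k : ℕ) : aeval x (U R ((n + 2 : ℕ) - 1 - k)) • g k =
        (2 * x) • aeval x (U R ((n + 1 : ℕ) - 1 - k)) • g k - aeval x (U R (n - 1 - k)) • g k := by
      rw [show ((n + 2 : ℕ) - 1 - k : ℤ) = (n - 1 - k) + 2 by push_cast; ring,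
        show ((n + 1 : ℕ) - 1 - k : ℤ) = (n - 1 - k) + 1 by push_cast; ring, U_add_two]
      simp [sub_smul, mul_smul, map_ofNat]
    have hlast : ∑ k ∈ range (n + 1), aeval x (U R (n - 1 - k)) • g k =
        ∑ k ∈ range n, aeval x (U R (n - 1 - k)) • g k := by
      simp [sum_range_succ]
    rw [h_add_two n le_rfl, ih₀ (fun h ↦ h_one (by omega)) fun j hj ↦ h_add_two j (by omega),
      ih₁ (fun h ↦ h_one (by omega)) fun j hj ↦ h_add_two j (by omega), sum_range_succ _ (n + 1),
      sum_congr rfl fun k _ ↦ hU k, sum_sub_distrib, ← smul_sum, hlast,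
      show ((n + 2 : ℕ) - 1 - (n + 1 : ℕ) : ℤ) = 0 by push_cast; ring, U_zero, map_one, one_smul]
    push_cast
    simp only [add_sub_cancel_right, smul_add, mul_smul, T_add_two, aeval_sub, map_mul, map_ofNat,
      aeval_X, sub_smul]
    abel

theorem derivative_T_eq_sum (R : Type*) [CommRing R] (n : ℕ) :
    derivative (T R n) =
      ∑ k ∈ range n, U R (n - 1 - k) * ((if k = 0 then 1 else 2) * T R k) := by
  have h := eq_add_sum_of_chebyshev_recurrence (R := R) (x := (X : R[X])) (n := n)
    (u := fun k ↦ derivative (T R k)) (g := fun k ↦ (if k = 0 then 1 else 2) * T R k) (by simp)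
    fun j _ ↦ by
      push_cast
      simp only [T_add_two, derivative_sub, derivative_mul, derivative_ofNat, zero_mul,
        derivative_X, mul_one, zero_add, smul_eq_mul]
      ring
  simpa using h

end Chebyshev

section PolynomialsInSymmetricOperators

variable {E : Type*} [NormedAddCommGroup E] [InnerProductSpace ℝ E]

section Diagonal

variable {ι : Type*} [Fintype ι] (B : OrthonormalBasis ι ℝ E) {X : Module.End ℝ E} {a : ι → ℝ}

theorem inner_apply_of_diagonal (hX : ∀ i, X (B i) = a i • B i) (i : ι) (v : E) :
    ⟪B i, X v⟫_ℝ = a i * ⟪B i, v⟫_ℝ := by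
  classical
  conv_lhs => rw [← B.sum_repr' v, map_sum, inner_sum]
  simp [hX, inner_smul_right, B.inner_eq_ite, mul_comm]

theorem inner_apply_self_mem_Icc_of_diagonal (hX : ∀ i, X (B i) = a i • B i) {α β : ℝ}
    (ha : ∀ i, a i ∈ Icc α β) (v : E) : ⟪X v, v⟫_ℝ ∈ Icc (α * ‖v‖ ^ 2) (β * ‖v‖ ^ 2) := by
  have hXv : ⟪X v, v⟫_ℝ = ∑ i, a i * ⟪B i, v⟫_ℝ ^ 2 := by
    rw [← B.sum_inner_mul_inner]
    refine sum_congr rfl fun i _ ↦ ?_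
    rw [real_inner_comm, inner_apply_of_diagonal B hX]
    ring
  rw [hXv, ← B.sum_sq_inner_right, mul_sum, mul_sum]
  exact ⟨sum_le_sum fun i _ ↦ by gcongr; exact (ha i).1,
    sum_le_sum fun i _ ↦ by gcongr; exact (ha i).2⟩

theorem norm_apply_le_of_diagonal (hX : ∀ i, X (B i) = a i • B i) {C : ℝ} (hC : 0 ≤ C)
    (ha : ∀ i, |a i| ≤ C) (v : E) : ‖X v‖ ≤ C * ‖v‖ := by
  refine le_of_sq_le_sq ?_ (by positivity)
  rw [mul_pow, ← B.sum_sq_norm_inner_right, ← B.sum_sq_norm_inner_right, mul_sum]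
  refine sum_le_sum fun i _ ↦ ?_
  rw [inner_apply_of_diagonal B hX, norm_mul, mul_pow]
  gcongr
  exact ha i

end Diagonal

theorem inner_toEuclideanLin_apply_self_mem_Icc {ι : Type*} [Fintype ι] [DecidableEq ι]
    {J : Matrix ι ι ℝ} (hJ : J.IsHermitian) {α β : ℝ} (heig : ∀ i, hJ.eigenvalues i ∈ Icc α β)
    (v : EuclideanSpace ℝ ι) :
    ⟪J.toEuclideanLin v, v⟫_ℝ ∈ Icc (α * ‖v‖ ^ 2) (β * ‖v‖ ^ 2) := by
  refine inner_apply_self_mem_Icc_of_diagonal hJ.eigenvectorBasis (fun i ↦ ?_) heig v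
  ext j
  simpa [Matrix.toLpLin_apply] using congrFun (hJ.mulVec_eigenvectorBasis i) j

section Compression

/-- The compression of an operator `X` to a subspace `K`: apply `X`, then project back to `K`. -/
def compression (K : Submodule ℝ E) [K.HasOrthogonalProjection] (X : Module.End ℝ E) :
    Module.End ℝ K :=
  K.orthogonalProjectionOnto.toLinearMap ∘ₗ X ∘ₗ K.subtype

variable (K : Submodule ℝ E) [K.HasOrthogonalProjection] {X : Module.End ℝ E}

theorem inner_compression_left (u v : K) : ⟪compression K X u, v⟫_ℝ = ⟪X u, (v : E)⟫_ℝ := by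
  simp [compression]

theorem inner_compression_right (u v : K) : ⟪u, compression K X v⟫_ℝ = ⟪(u : E), X v⟫_ℝ := by
  simp [compression]

theorem isSymmetric_compression (hX : X.IsSymmetric) : (compression K X).IsSymmetric :=
  fun u v ↦ by rw [inner_compression_left, inner_compression_right, hX]

theorem coe_compression_apply {u : K} (hu : X u ∈ K) : (compression K X u : E) = X u := by
  simpa [compression] using K.starProjection_eq_self_iff.mpr hu

theorem coe_compression_pow_apply {v : K} {n : ℕ} (hK : ∀ i ≤ n, (X ^ i) v ∈ K) :
    (((compression K X) ^ n) v : E) = (X ^ n) v := by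
  induction n with
  | zero => rfl
  | succ n ih =>
    have ih := ih fun i hi ↦ hK i (by omega)
    have hmem : X (((compression K X) ^ n) v) ∈ K := by
      rw [ih, ← Module.End.mul_apply, ← pow_succ']
      exact hK _ le_rfl
    rw [pow_succ', Module.End.mul_apply, coe_compression_apply K hmem, ih, pow_succ',
      Module.End.mul_apply]

theorem coe_aeval_compression_apply {v : K} {p : ℝ[X]} (hK : ∀ i ≤ p.natDegree, (X ^ i) v ∈ K) :
    (aeval (compression K X) p v : E) = aeval X p v := by
  simp only [aeval_eq_sum_range, LinearMap.sum_apply, LinearMap.smul_apply, Submodule.coe_sum,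
    Submodule.coe_smul]
  refine sum_congr rfl fun i hi ↦ ?_
  rw [coe_compression_pow_apply K fun j hj ↦ hK j (by grind)]

end Compression

variable {X : Module.End ℝ E} {α β : ℝ}

theorem norm_aeval_apply_le_of_finiteDimensional [FiniteDimensional ℝ E] (hX : X.IsSymmetric)
    (hXαβ : ∀ v, ⟪X v, v⟫_ℝ ∈ Icc (α * ‖v‖ ^ 2) (β * ‖v‖ ^ 2)) {p : ℝ[X]} {C : ℝ} (hC : 0 ≤ C)
    (hp : ∀ x ∈ Icc α β, |p.eval x| ≤ C) (v : E) : ‖aeval X p v‖ ≤ C * ‖v‖ := by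
  let B := hX.eigenvectorBasis rfl
  have hB (i) : X (B i) = hX.eigenvalues rfl i • B i := hX.apply_eigenvectorBasis rfl i
  refine norm_apply_le_of_diagonal B
    (fun i ↦ Module.End.aeval_apply_of_mem_apply_eq_smul (hB i)) hC (fun i ↦ hp _ ?_) v
  simpa [hB, real_inner_smul_left] using hXαβ (B i)

theorem norm_aeval_apply_le_of_forall_pow_apply_mem (hX : X.IsSymmetric)
    (hXαβ : ∀ v, ⟪X v, v⟫_ℝ ∈ Icc (α * ‖v‖ ^ 2) (β * ‖v‖ ^ 2)) {p : ℝ[X]} {C : ℝ} (hC : 0 ≤ C)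
    (hp : ∀ x ∈ Icc α β, |p.eval x| ≤ C) (K : Submodule ℝ E) [FiniteDimensional ℝ K] (v : K)
    (hK : ∀ i ≤ p.natDegree, (X ^ i) v ∈ K) : ‖aeval X p (v : E)‖ ≤ C * ‖v‖ := by
  rw [← coe_aeval_compression_apply K hK]
  exact norm_aeval_apply_le_of_finiteDimensional (isSymmetric_compression K hX)
    (fun u ↦ by rw [inner_compression_left]; exact hXαβ u) hC hp v

/-- In infinite dimension there may be no eigenvectors, but `p(X) v` only involves the Krylov
subspace spanned by `v, X v, …, Xⁿ v`, to which `X` can be compressed. -/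
theorem norm_aeval_apply_le (hX : X.IsSymmetric)
    (hXαβ : ∀ v, ⟪X v, v⟫_ℝ ∈ Icc (α * ‖v‖ ^ 2) (β * ‖v‖ ^ 2)) {p : ℝ[X]} {C : ℝ} (hC : 0 ≤ C)
    (hp : ∀ x ∈ Icc α β, |p.eval x| ≤ C) (v : E) : ‖aeval X p v‖ ≤ C * ‖v‖ := by
  set krylov : Set E := range fun i : Fin (p.natDegree + 1) ↦ (X ^ (i : ℕ)) v
  have hK (i : ℕ) (hi : i ≤ p.natDegree) : (X ^ i) v ∈ Submodule.span ℝ krylov :=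
    Submodule.subset_span ⟨⟨i, by omega⟩, rfl⟩
  have : FiniteDimensional ℝ (Submodule.span ℝ krylov) :=
    FiniteDimensional.span_of_finite ℝ (finite_range _)
  exact norm_aeval_apply_le_of_forall_pow_apply_mem hX hXαβ hC hp _ ⟨v, hK 0 (Nat.zero_le _)⟩ hK

end PolynomialsInSymmetricOperators

section ChebyshevRecurrence

variable {E : Type*} [NormedAddCommGroup E] [InnerProductSpace ℝ E] {X : Module.End ℝ E} {w : ℝ}

theorem norm_aeval_T_apply_le (hw : 1 ≤ w) (hX : X.IsSymmetric)
    (hXw : ∀ v, ⟪X v, v⟫_ℝ ∈ Icc (-w * ‖v‖ ^ 2) (w * ‖v‖ ^ 2)) (n : ℤ) (v : E) :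
    ‖aeval X (T ℝ n) v‖ ≤ (T ℝ n).eval w * ‖v‖ :=
  norm_aeval_apply_le hX hXw (eval_T_real_pos n hw).le
    (fun _ hx ↦ abs_eval_T_real_le_eval n hw (abs_le.mpr hx)) v

theorem norm_aeval_U_apply_le (hw : 1 ≤ w) (hX : X.IsSymmetric)
    (hXw : ∀ v, ⟪X v, v⟫_ℝ ∈ Icc (-w * ‖v‖ ^ 2) (w * ‖v‖ ^ 2)) (n : ℕ) (v : E) :
    ‖aeval X (U ℝ n) v‖ ≤ (U ℝ n).eval w * ‖v‖ :=
  norm_aeval_apply_le hX hXw (eval_U_real_pos n hw).le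
    (fun _ hx ↦ abs_eval_U_real_le_eval n hw (abs_le.mpr hx)) v

theorem norm_le_of_chebyshev_recurrence (hw : 1 ≤ w) (hX : X.IsSymmetric)
    (hXw : ∀ v, ⟪X v, v⟫_ℝ ∈ Icc (-w * ‖v‖ ^ 2) (w * ‖v‖ ^ 2)) {u g : ℕ → E} {n : ℕ} {G : ℝ}
    (h_one : 1 ≤ n → u 1 = X (u 0) + g 0)
    (h_add_two : ∀ j, j + 2 ≤ n → u (j + 2) = (2 * X) (u (j + 1)) - u j + g (j + 1))
    (hg : ∀ k < n, ‖g k‖ ≤ G * ((if k = 0 then 1 else 2) * (T ℝ k).eval w)) :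
    ‖u n‖ ≤ (T ℝ n).eval w * ‖u 0‖ + G * (derivative (T ℝ n)).eval w := by
  have hterm (k : ℕ) (hk : k ∈ range n) : ‖aeval X (U ℝ (n - 1 - k)) (g k)‖ ≤
      (U ℝ (n - 1 - k)).eval w * (G * ((if k = 0 then 1 else 2) * (T ℝ k).eval w)) := by
    obtain ⟨m, rfl⟩ := Nat.exists_eq_add_of_lt (mem_range.mp hk)
    rw [show (((k + m + 1 : ℕ) : ℤ) - 1 - k) = m by push_cast; ring]
    refine (norm_aeval_U_apply_le hw hX hXw m _).trans ?_
    gcongr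
    · exact (eval_U_real_pos m hw).le
    · exact hg k (mem_range.mp hk)
  calc ‖u n‖ = ‖aeval X (T ℝ n) (u 0) + ∑ k ∈ range n, aeval X (U ℝ (n - 1 - k)) (g k)‖ := by
        simpa using congrArg norm
          (eq_add_sum_of_chebyshev_recurrence (R := ℝ) (x := X) h_one h_add_two)
    _ ≤ (T ℝ n).eval w * ‖u 0‖ + ∑ k ∈ range n,
          (U ℝ (n - 1 - k)).eval w * (G * ((if k = 0 then 1 else 2) * (T ℝ k).eval w)) :=
        norm_add_le_of_le (norm_aeval_T_apply_le hw hX hXw n _) (norm_sum_le_of_le _ hterm)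
    _ = (T ℝ n).eval w * ‖u 0‖ + G * (derivative (T ℝ n)).eval w := by
        rw [derivative_T_eq_sum, eval_finsetSum, mul_sum]
        congr 1
        refine sum_congr rfl fun k _ ↦ ?_
        split_ifs <;> simp only [eval_mul, eval_ofNat, eval_one] <;> ring

end ChebyshevRecurrence

section Linearization

variable {E F : Type*} [NormedAddCommGroup E] [NormedSpace ℝ E] [NormedAddCommGroup F]
  [NormedSpace ℝ F] {f : E → F} {C : ℝ}

theorem norm_fderiv_sub_fderiv_le_of_iteratedFDeriv_two_le (hf : ContDiff ℝ 2 f)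
    (hC : ∀ x, ‖iteratedFDeriv ℝ 2 f x‖ ≤ C) (x y : E) :
    ‖fderiv ℝ f x - fderiv ℝ f y‖ ≤ C * ‖x - y‖ := by
  have hdiff : Differentiable ℝ (fderiv ℝ f) :=
    (hf.fderiv_right (m := 1) (by norm_num)).differentiable one_ne_zero
  refine convex_univ.norm_image_sub_le_of_norm_fderiv_le (𝕜 := ℝ) (fun z _ ↦ hdiff z)
    (fun z _ ↦ ?_) trivial trivial
  rw [← norm_iteratedFDeriv_one, norm_iteratedFDeriv_fderiv]
  exact hC z

variable {A : E →L[ℝ] F} {x : E}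

theorem norm_sub_sub_apply_le_of_norm_fderiv_sub_le (hf : Differentiable ℝ f)
    (hC : ∀ y, ‖fderiv ℝ f y - A‖ ≤ C * ‖y - x‖) (h : E) :
    ‖f (x + h) - f x - A h‖ ≤ C / 2 * ‖h‖ ^ 2 := by
  have hderiv (t : ℝ) : HasDerivAt (fun t : ℝ ↦ f (x + t • h) - f x - t • A h)
      ((fderiv ℝ f (x + t • h) - A) h) t := by
    have hline : HasDerivAt (fun t : ℝ ↦ x + t • h) h t := by
      simpa using ((hasDerivAt_id t).smul_const h).const_add x
    simpa using! (((hf _).hasFDerivAt.comp_hasDerivAt t hline).sub_const (f x)).sub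
      ((hasDerivAt_id t).smul_const (A h))
  have hbound (t : ℝ) (ht : 0 ≤ t) :
      ‖(fderiv ℝ f (x + t • h) - A) h‖ ≤ C / 2 * ‖h‖ ^ 2 * (2 * t) :=
    calc _ ≤ ‖fderiv ℝ f (x + t • h) - A‖ * ‖h‖ := ContinuousLinearMap.le_opNorm _ _
      _ ≤ C * ‖x + t • h - x‖ * ‖h‖ := by gcongr; exact hC _
      _ = C / 2 * ‖h‖ ^ 2 * (2 * t) := by
        rw [add_sub_cancel_left, norm_smul, Real.norm_of_nonneg ht]
        ring
  have hB (t : ℝ) :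
      HasDerivAt (fun t ↦ C / 2 * ‖h‖ ^ 2 * t ^ 2) (C / 2 * ‖h‖ ^ 2 * (2 * t)) t := by
    simpa using (hasDerivAt_pow 2 t).const_mul (C / 2 * ‖h‖ ^ 2)
  simpa using image_norm_le_of_norm_deriv_right_le_deriv_boundary (a := 0) (b := 1)
    (fun t _ ↦ (hderiv t).continuousAt.continuousWithinAt)
    (fun t _ ↦ (hderiv t).hasDerivWithinAt) (by simp) hB (fun t ht ↦ hbound t ht.1)
    (right_mem_Icc.mpr zero_le_one)

theorem norm_sub_sub_apply_add_sub_le_of_norm_fderiv_sub_le (hf : Differentiable ℝ f) (hC₀ : 0 ≤ C)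
    (hC : ∀ y, ‖fderiv ℝ f y - A‖ ≤ C * ‖y - x‖) (e u v : E) :
    ‖f (x + e + u) - f (x + v) - A (e + (u - v))‖ ≤ C * (‖e‖ ^ 2 + ‖u‖ ^ 2 + ‖v‖ ^ 2) := by
  have heu : ‖e + u‖ ^ 2 ≤ 2 * (‖e‖ ^ 2 + ‖u‖ ^ 2) :=
    (pow_le_pow_left₀ (norm_nonneg _) (norm_add_le e u) 2).trans add_sq_le
  calc ‖f (x + e + u) - f (x + v) - A (e + (u - v))‖
      = ‖(f (x + (e + u)) - f x - A (e + u)) - (f (x + v) - f x - A v)‖ := by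
        simp only [map_add, map_sub, ← add_assoc]
        congr 1
        abel
    _ ≤ C / 2 * ‖e + u‖ ^ 2 + C / 2 * ‖v‖ ^ 2 :=
        (norm_sub_le _ _).trans (add_le_add (norm_sub_sub_apply_le_of_norm_fderiv_sub_le hf hC _)
          (norm_sub_sub_apply_le_of_norm_fderiv_sub_le hf hC _))
    _ ≤ C / 2 * (2 * (‖e‖ ^ 2 + ‖u‖ ^ 2)) + C / 2 * (2 * ‖v‖ ^ 2) := by
        gcongr
        exact le_mul_of_one_le_left (sq_nonneg _) one_le_two
    _ = C * (‖e‖ ^ 2 + ‖u‖ ^ 2 + ‖v‖ ^ 2) := by ring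

end Linearization

section RKCOperator

/-- The operator `ω₀ + τ A`: on a linear problem `y' = A y` the stages of a Runge–Kutta–Chebyshev
step of size `h` are multiples of Chebyshev polynomials in it, with `τ = ω₁ h`. -/
def rkcOperator {E : Type*} [AddCommGroup E] [Module ℝ E] (ω₀ τ : ℝ)
    (A : Module.End ℝ E) : Module.End ℝ E :=
  ω₀ • 1 + τ • A

variable {E : Type*} [NormedAddCommGroup E] [InnerProductSpace ℝ E] {A : Module.End ℝ E}
  {ω₀ τ ρ : ℝ}

theorem isSymmetric_rkcOperator (hA : A.IsSymmetric) (ω₀ τ : ℝ) :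
    (rkcOperator ω₀ τ A).IsSymmetric :=
  (LinearMap.IsSymmetric.one.smul rfl).add (hA.smul rfl)

theorem inner_rkcOperator_apply_self_mem_Icc
    (hA : ∀ v, ⟪A v, v⟫_ℝ ∈ Icc (-ρ * ‖v‖ ^ 2) 0) (hτ : 0 ≤ τ) (hτρ : τ * ρ ≤ 2 * ω₀) (v : E) :
    ⟪rkcOperator ω₀ τ A v, v⟫_ℝ ∈ Icc (-ω₀ * ‖v‖ ^ 2) (ω₀ * ‖v‖ ^ 2) := by
  obtain ⟨hl, hu⟩ := hA v
  have hv : ⟪rkcOperator ω₀ τ A v, v⟫_ℝ = ω₀ * ‖v‖ ^ 2 + τ * ⟪A v, v⟫_ℝ := by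
    simp [rkcOperator, inner_add_left, real_inner_smul_left]
  rw [hv]
  constructor
  · calc -ω₀ * ‖v‖ ^ 2 = ω₀ * ‖v‖ ^ 2 - 2 * ω₀ * ‖v‖ ^ 2 := by ring
      _ ≤ ω₀ * ‖v‖ ^ 2 - τ * ρ * ‖v‖ ^ 2 := by gcongr
      _ = ω₀ * ‖v‖ ^ 2 + τ * (-ρ * ‖v‖ ^ 2) := by ring
      _ ≤ ω₀ * ‖v‖ ^ 2 + τ * ⟪A v, v⟫_ℝ := by gcongr
  · exact add_le_of_nonpos_right (mul_nonpos_of_nonneg_of_nonpos hτ hu)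

end RKCOperator

/-- The coefficients of the `s`-stage first-order Runge–Kutta–Chebyshev method RKC1. -/
structure IsRKC1Coeffs (s : ℕ) (ω₀ ω₁ : ℝ) (b μ ν κ : ℕ → ℝ) : Prop where
  ω₁_eq : ω₁ = (T ℝ s).eval ω₀ / (derivative (T ℝ s)).eval ω₀
  b_eq : ∀ j, j ≤ s → b j = 1 / (T ℝ j).eval ω₀
  μ_one : μ 1 = b 1 * ω₁
  μ_eq : ∀ j, 2 ≤ j → j ≤ s → μ j = 2 * ω₁ * b j / b (j - 1)
  ν_eq : ∀ j, 2 ≤ j → j ≤ s → ν j = 2 * ω₀ * b j / b (j - 1)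
  κ_eq : ∀ j, 2 ≤ j → j ≤ s → κ j = -(b j / b (j - 2))

/-- `d` is the sequence of increments `d_0, …, d_s` of a Runge–Kutta–Chebyshev step of size `h`
whose right-hand side takes the value `F k` at the `k`-th stage. Leaving `F` arbitrary covers exact,
perturbed and difference schemes alike. -/
structure IsRKCStages {E : Type*} [AddCommGroup E] [Module ℝ E] (μ ν κ : ℕ → ℝ) (h : ℝ) (s : ℕ)
    (F d : ℕ → E) : Prop where
  zero : d 0 = 0
  one : d 1 = (μ 1 * h) • F 0
  step : ∀ j, 2 ≤ j → j ≤ s →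
    d j = ν j • d (j - 1) + κ j • d (j - 2) + (μ j * h) • F (j - 1)

namespace IsRKC1Coeffs

variable {s : ℕ} {ω₀ ω₁ : ℝ} {b μ ν κ : ℕ → ℝ}

theorem ω₁_pos (hc : IsRKC1Coeffs s ω₀ ω₁ b μ ν κ) (hs : 1 ≤ s) (hω₀ : 1 ≤ ω₀) : 0 < ω₁ := by
  rw [hc.ω₁_eq]
  exact div_pos (eval_T_real_pos s hω₀) (eval_derivative_T_real_pos hs hω₀)

theorem ω₁_mul_eval_derivative_T (hc : IsRKC1Coeffs s ω₀ ω₁ b μ ν κ) (hs : 1 ≤ s) (hω₀ : 1 ≤ ω₀) :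
    ω₁ * (derivative (T ℝ s)).eval ω₀ = (T ℝ s).eval ω₀ := by
  rw [hc.ω₁_eq, div_mul_cancel₀ _ (eval_derivative_T_real_pos hs hω₀).ne']

theorem ω₀_mul_μ_one (hc : IsRKC1Coeffs s ω₀ ω₁ b μ ν κ) (hs : 1 ≤ s) (hω₀ : 1 ≤ ω₀) :
    ω₀ * μ 1 = ω₁ := by
  have : 0 < ω₀ := zero_lt_one.trans_le hω₀
  rw [hc.μ_one, hc.b_eq 1 hs, Nat.cast_one, T_one, eval_X]
  field_simp

end IsRKC1Coeffs

namespace IsRKCStages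

section Module

variable {E : Type*} [AddCommGroup E] [Module ℝ E] {s : ℕ} {ω₀ ω₁ h : ℝ} {b μ ν κ : ℕ → ℝ}
  {F F' d d' : ℕ → E}

theorem sub (hd : IsRKCStages μ ν κ h s F d) (hd' : IsRKCStages μ ν κ h s F' d') :
    IsRKCStages μ ν κ h s (F - F') (d - d') where
  zero := by simp [hd.zero, hd'.zero]
  one := by simp [hd.one, hd'.one, smul_sub]
  step j h₂ hj := by
    simp only [Pi.sub_apply, hd.step j h₂ hj, hd'.step j h₂ hj]
    module

theorem eval_T_smul_add_two (hd : IsRKCStages μ ν κ h s F d) (hc : IsRKC1Coeffs s ω₀ ω₁ b μ ν κ)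
    (hω₀ : 1 ≤ ω₀) {j : ℕ} (hj : j + 2 ≤ s) :
    (T ℝ (j + 2)).eval ω₀ • d (j + 2) =
      (2 * ω₀ * (T ℝ (j + 1)).eval ω₀) • d (j + 1) - (T ℝ j).eval ω₀ • d j
        + (2 * (ω₁ * h) * (T ℝ (j + 1)).eval ω₀) • F (j + 1) := by
  have hT₀ := (eval_T_real_pos j hω₀).ne'
  have hT₁ := (eval_T_real_pos (j + 1) hω₀).ne'
  have hT₂ := (eval_T_real_pos (j + 2) hω₀).ne'
  have hb₀ := hc.b_eq j (by omega)
  have hb₁ := hc.b_eq (j + 1) (by omega)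
  have hb₂ := hc.b_eq (j + 2) hj
  push_cast at hb₁ hb₂
  have hν : (T ℝ (j + 2)).eval ω₀ * ν (j + 2) = 2 * ω₀ * (T ℝ (j + 1)).eval ω₀ := by
    rw [hc.ν_eq _ (by omega) hj, Nat.add_sub_cancel_right (m := 1), hb₁, hb₂]
    field_simp
  have hκ : (T ℝ (j + 2)).eval ω₀ * κ (j + 2) = -(T ℝ j).eval ω₀ := by
    rw [hc.κ_eq _ (by omega) hj, Nat.add_sub_cancel, hb₀, hb₂]
    field_simp
  have hμ : (T ℝ (j + 2)).eval ω₀ * (μ (j + 2) * h) =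
      2 * (ω₁ * h) * (T ℝ (j + 1)).eval ω₀ := by
    rw [hc.μ_eq _ (by omega) hj, Nat.add_sub_cancel_right (m := 1), hb₁, hb₂]
    field_simp
  rw [hd.step _ (by omega) hj, smul_add, smul_add, smul_smul, smul_smul, smul_smul, hν, hκ, hμ,
    neg_smul, ← sub_eq_add_neg]
  rfl

theorem eval_T_smul_add_apply_one (hd : IsRKCStages μ ν κ h s F d)
    (hc : IsRKC1Coeffs s ω₀ ω₁ b μ ν κ) (hω₀ : 1 ≤ ω₀) (hs : 1 ≤ s) (A : Module.End ℝ E) (e : E) :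
    (T ℝ 1).eval ω₀ • (e + d 1) =
      rkcOperator ω₀ (ω₁ * h) A ((T ℝ 0).eval ω₀ • (e + d 0)) +
        (ω₁ * h) • (F 0 - A (e + d 0)) := by
  simp only [rkcOperator, hd.zero, hd.one, ← hc.ω₀_mul_μ_one hs hω₀, T_zero, T_one, eval_one,
    eval_X, add_zero, one_smul, LinearMap.add_apply, LinearMap.smul_apply, Module.End.one_apply]
  module

theorem eval_T_smul_add_apply_add_two (hd : IsRKCStages μ ν κ h s F d)
    (hc : IsRKC1Coeffs s ω₀ ω₁ b μ ν κ) (hω₀ : 1 ≤ ω₀) (A : Module.End ℝ E) (e : E) {j : ℕ}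
    (hj : j + 2 ≤ s) :
    (T ℝ (j + 2)).eval ω₀ • (e + d (j + 2)) =
      (2 * rkcOperator ω₀ (ω₁ * h) A) ((T ℝ (j + 1)).eval ω₀ • (e + d (j + 1))) -
        (T ℝ j).eval ω₀ • (e + d j) +
        (2 * (ω₁ * h) * (T ℝ (j + 1)).eval ω₀) • (F (j + 1) - A (e + d (j + 1))) := by
  rw [smul_add, hd.eval_T_smul_add_two hc hω₀ hj, T_add_two]
  simp only [rkcOperator, eval_sub, eval_mul, eval_ofNat, eval_X, two_mul (_ + _ : Module.End ℝ E),
    LinearMap.add_apply, LinearMap.smul_apply, Module.End.one_apply, map_smul]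
  module

end Module

section InnerProductSpace

variable {E : Type*} [NormedAddCommGroup E] [InnerProductSpace ℝ E] {A : Module.End ℝ E}
  {s : ℕ} {ω₀ ω₁ h ρ R : ℝ} {b μ ν κ : ℕ → ℝ} {F d : ℕ → E}

theorem norm_add_apply_le (hd : IsRKCStages μ ν κ h s F d) (hc : IsRKC1Coeffs s ω₀ ω₁ b μ ν κ)
    (hs : 1 ≤ s) (hω₀ : 1 ≤ ω₀) (hh : 0 ≤ h) (hρ : h * ρ ≤ 2 * ω₀ / ω₁) (hA : A.IsSymmetric)
    (hAρ : ∀ v, ⟪A v, v⟫_ℝ ∈ Icc (-ρ * ‖v‖ ^ 2) 0) (e : E)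
    (hR : ∀ k < s, ‖F k - A (e + d k)‖ ≤ R) : ‖e + d s‖ ≤ ‖e‖ + h * R := by
  have hω₁ := hc.ω₁_pos hs hω₀
  have hρ' : ω₁ * h * ρ ≤ 2 * ω₀ := by rwa [mul_assoc, ← le_div_iff₀' hω₁]
  have hrec : ‖(T ℝ s).eval ω₀ • (e + d s)‖ ≤
      (T ℝ s).eval ω₀ * ‖(T ℝ (0 : ℕ)).eval ω₀ • (e + d 0)‖ +
        ω₁ * h * R * (derivative (T ℝ s)).eval ω₀ := by
    refine norm_le_of_chebyshev_recurrence (u := fun j ↦ (T ℝ j).eval ω₀ • (e + d j))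
      (g := fun k ↦ (ω₁ * h * ((if k = 0 then 1 else 2) * (T ℝ k).eval ω₀)) •
        (F k - A (e + d k))) hω₀ (isSymmetric_rkcOperator hA ω₀ (ω₁ * h))
      (inner_rkcOperator_apply_self_mem_Icc hAρ (by positivity) hρ') (fun _ ↦ ?_)
      (fun j hj ↦ ?_) fun k hk ↦ ?_
    · simpa using hd.eval_T_smul_add_apply_one hc hω₀ hs A e
    · simpa [mul_assoc, mul_left_comm] using hd.eval_T_smul_add_apply_add_two hc hω₀ A e hj
    · have hT := eval_T_real_pos k hω₀
      have hpos : 0 ≤ ω₁ * h * ((if k = 0 then 1 else 2) * (T ℝ k).eval ω₀) := by positivity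
      rw [norm_smul, Real.norm_of_nonneg hpos, mul_right_comm _ R]
      gcongr
      exact hR k hk
  have hT := eval_T_real_pos s hω₀
  refine le_of_mul_le_mul_left ?_ hT
  calc (T ℝ s).eval ω₀ * ‖e + d s‖ = ‖(T ℝ s).eval ω₀ • (e + d s)‖ := by
        rw [norm_smul, Real.norm_of_nonneg hT.le]
    _ ≤ _ := hrec
    _ = (T ℝ s).eval ω₀ * ‖e‖ + h * R * (ω₁ * (derivative (T ℝ s)).eval ω₀) := by
        simp only [hd.zero, Nat.cast_zero, T_zero, eval_one, one_smul, add_zero]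
        ring
    _ = (T ℝ s).eval ω₀ * (‖e‖ + h * R) := by
        rw [hc.ω₁_mul_eval_derivative_T hs hω₀]
        ring

end InnerProductSpace

end IsRKCStages

theorem mixed_precision_rkc1_error_propagation_general {E : Type*} [NormedAddCommGroup E]
    [InnerProductSpace ℝ E] {s : ℕ} (hs : 1 ≤ s) {ω₀ ω₁ : ℝ} (hω₀ : 1 ≤ ω₀) {b μ ν κ : ℕ → ℝ}
    (hc : IsRKC1Coeffs s ω₀ ω₁ b μ ν κ) {f : E → E} (hf : Differentiable ℝ f) {A : E →L[ℝ] E}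
    (hA : (A : E →ₗ[ℝ] E).IsSymmetric) {ρ : ℝ} (hAρ : ∀ v, ⟪A v, v⟫_ℝ ∈ Icc (-ρ * ‖v‖ ^ 2) 0)
    {y y' : E} {C : ℝ} (hC₀ : 0 ≤ C) (hC : ∀ x, ‖fderiv ℝ f x - A‖ ≤ C * ‖x - y‖)
    {h : ℝ} (hh : 0 ≤ h) (hρ : h * ρ ≤ 2 * ω₀ / ω₁) {d d' F' : ℕ → E}
    (hd : IsRKCStages μ ν κ h s (fun k ↦ f (y + d k)) d) (hd' : IsRKCStages μ ν κ h s F' d')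
    {η δ δ' : ℝ} (hη : ∀ k < s, ‖F' k - f (y' + d' k)‖ ≤ η) (hδ : ∀ k < s, ‖d k‖ ≤ δ)
    (hδ' : ∀ k < s, ‖d' k‖ ≤ δ') :
    ‖y' + d' s - (y + d s)‖ ≤ ‖y' - y‖ + h * (C * (‖y' - y‖ ^ 2 + δ' ^ 2 + δ ^ 2) + η) := by
  have hresidual (k : ℕ) (hk : k < s) :
      ‖F' k - f (y + d k) - A (y' - y + (d' k - d k))‖ ≤
        C * (‖y' - y‖ ^ 2 + δ' ^ 2 + δ ^ 2) + η := by
    have hlin := norm_sub_sub_apply_add_sub_le_of_norm_fderiv_sub_le hf hC₀ hC (y' - y) (d' k) (d k)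
    rw [add_sub_cancel] at hlin
    calc _ = ‖(f (y' + d' k) - f (y + d k) - A (y' - y + (d' k - d k))) +
          (F' k - f (y' + d' k))‖ := by
          congr 1
          abel
      _ ≤ C * (‖y' - y‖ ^ 2 + ‖d' k‖ ^ 2 + ‖d k‖ ^ 2) + η := norm_add_le_of_le hlin (hη k hk)
      _ ≤ _ := by
          gcongr
          exacts [hδ' k hk, hδ k hk]
  calc ‖y' + d' s - (y + d s)‖ = ‖y' - y + (d' - d) s‖ := by rw [Pi.sub_apply, add_sub_add_comm]
    _ ≤ _ := (hd'.sub hd).norm_add_apply_le hc hs hω₀ hh hρ hA hAρ (y' - y) hresidual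

/-- error propagation bound for one step of the mixed-precision RKC1 scheme
versus the exact RKC1 scheme. -/
theorem mixed_precision_rkc1_error_propagation
    {n : ℕ} (s : ℕ) (hs : 1 ≤ s) (ϑ : ℝ) (hϑ : 0 ≤ ϑ)
    (ω0 ω1 : ℝ) (b μ ν κ : ℕ → ℝ)
    (hω0 : ω0 = 1 + ϑ / (s : ℝ) ^ 2)
    (hω1 : ω1 = chebT ℝ s ω0 / deriv (fun x => chebT ℝ s x) ω0)
    (hb : ∀ j, j ≤ s → b j = 1 / chebT ℝ j ω0)
    (hμ1 : μ 1 = b 1 * ω1)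
    (hμ : ∀ j, 2 ≤ j → j ≤ s → μ j = 2 * ω1 * b j / b (j - 1))
    (hν : ∀ j, 2 ≤ j → j ≤ s → ν j = 2 * ω0 * b j / b (j - 1))
    (hκ : ∀ j, 2 ≤ j → j ≤ s → κ j = -(b j / b (j - 2)))
    (f : EuclideanSpace ℝ (Fin n) → EuclideanSpace ℝ (Fin n))
    (hf : ContDiff ℝ 2 f)
    (Cf'' : ℝ) (hCf'' : ∀ x, ‖iteratedFDeriv ℝ 2 f x‖ ≤ Cf'')
    (yn yhat : EuclideanSpace ℝ (Fin n)) (Δt : ℝ) (hΔt : 0 < Δt)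
    (J : Matrix (Fin n) (Fin n) ℝ) (hJsymm : J.IsHermitian)
    (hJ : HasFDerivAt f ((Matrix.toEuclideanLin J).toContinuousLinearMap) yn)
    (ρ : ℝ) (hρ : 0 ≤ ρ) (heig : ∀ i, hJsymm.eigenvalues i ∈ Set.Icc (-ρ) 0)
    (hstab : Δt * ρ ≤ 2 * ω0 / ω1)
    -- exact RKC1 step
    (d : ℕ → EuclideanSpace ℝ (Fin n))
    (hd0 : d 0 = 0) (hd1 : d 1 = (μ 1 * Δt) • f yn)
    (hd : ∀ j, 2 ≤ j → j ≤ s →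
      d j = ν j • d (j - 1) + κ j • d (j - 2) + (μ j * Δt) • f (yn + d (j - 1)))
    (yn' : EuclideanSpace ℝ (Fin n)) (hyn' : yn' = yn + d s)
    -- mixed-precision RKC1 step
    (Δf : ℕ → EuclideanSpace ℝ (Fin n))
    (dh : ℕ → EuclideanSpace ℝ (Fin n))
    (hdh0 : dh 0 = 0) (hdh1 : dh 1 = (μ 1 * Δt) • f yhat)
    (hdh : ∀ j, 2 ≤ j → j ≤ s →
      dh j = ν j • dh (j - 1) + κ j • dh (j - 2) + (μ j * Δt) • (f yhat + Δf (j - 1)))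
    (yhat' : EuclideanSpace ℝ (Fin n)) (hyhat' : yhat' = yhat + dh s)
    -- assumptions on the perturbations and internal stages
    (Chat ε CΔ Cd : ℝ) (hChat : 0 ≤ Chat) (hε : 0 ≤ ε) (hCΔ : 0 ≤ CΔ) (hCd : 0 ≤ Cd)
    (hΔf : ∀ j, 1 ≤ j → j ≤ s - 1 →
      ‖Δf j - (f (yhat + dh j) - f yhat)‖ ≤ min (Chat * ε * Δt) (CΔ * ‖yhat‖))
    (hdhb : ∀ j, 1 ≤ j → j ≤ s - 1 →
      ‖dh j‖ ≤ Cd * min (Δt * ‖f yhat‖) ‖yhat‖)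
    (hdb : ∀ j, 1 ≤ j → j ≤ s - 1 →
      ‖d j‖ ≤ Cd * min (Δt * ‖f yn‖) ‖yn‖) :
    ‖yhat' - yn'‖ ≤ ‖yhat - yn‖ + Cf'' * ‖yhat - yn‖ ^ 2 * Δt
      + min (Chat * ε * Δt) (CΔ * ‖yhat‖) * Δt
      + Cf'' * Cd ^ 2 * ((min (Δt * ‖f yhat‖) ‖yhat‖) ^ 2 + (min (Δt * ‖f yn‖) ‖yn‖) ^ 2) * Δt := by
  have hω0' : 1 ≤ ω0 := hω0 ▸ le_add_of_nonneg_right (by positivity)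
  simp only [chebT_eq_eval_T, Polynomial.deriv] at hω1 hb
  have hexact : IsRKCStages μ ν κ Δt s (fun k ↦ f (yn + d k)) d := ⟨hd0, by simpa [hd0], hd⟩
  have hmixed : IsRKCStages μ ν κ Δt s (fun k ↦ f yhat + Function.update Δf 0 0 k) dh :=
    ⟨hdh0, by simpa, fun j h₂ hj ↦ by rw [Function.update_of_ne (by omega), hdh j h₂ hj]⟩
  have of_zero {P : ℕ → Prop} (h₀ : P 0) (h : ∀ j, 1 ≤ j → j ≤ s - 1 → P j) (k : ℕ) (hk : k < s) :
      P k := k.eq_zero_or_pos.elim (· ▸ h₀) (h k · (by omega))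
  have hη (k : ℕ) (hk : k < s) : ‖f yhat + Function.update Δf 0 0 k - f (yhat + dh k)‖ ≤
      min (Chat * ε * Δt) (CΔ * ‖yhat‖) := by
    obtain rfl | hk₀ := eq_or_ne k 0
    · rw [Function.update_self, hdh0, add_zero, add_zero, sub_self, norm_zero]
      positivity
    · rw [Function.update_of_ne hk₀, add_comm, ← sub_sub_eq_add_sub]
      exact hΔf k (by omega) (by omega)
  have hAρ := inner_toEuclideanLin_apply_self_mem_Icc hJsymm heig
  have hC := norm_fderiv_sub_fderiv_le_of_iteratedFDeriv_two_le hf hCf'' (y := yn)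
  rw [hJ.fderiv] at hC
  rw [hyn', hyhat']
  exact (mixed_precision_rkc1_error_propagation_general hs hω0' ⟨hω1, hb, hμ1, hμ, hν, hκ⟩
    (hf.differentiable two_ne_zero) (Matrix.isSymmetric_toEuclideanLin_iff.mpr hJsymm)
    (fun v ↦ by simpa only [zero_mul] using! hAρ v) ((norm_nonneg _).trans (hCf'' 0)) hC hΔt.le
    hstab hexact hmixed hη (of_zero (by rw [hd0, norm_zero]; positivity) hdb)
    (of_zero (by rw [hdh0, norm_zero]; positivity) hdhb)).trans_eq (by ring)
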